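/- (Localized coercivity.) Let Φ : ℝ^d → ℝ be a positive smooth radial function with Φ(x) = 1 for |x| ≤ 1, Φ(x) = e^{−|x|} for |x| ≥ 2, 0 < Φ ≤ 1, and |∇Φ(x)| ≤ C_Φ Φ(x) for all x, and set Φ_A(x) := Φ(x/A) for A > 0. Assume the penalized coercivity: there exist ν₁, ν₂ > 0 such that for every H¹ function f = f₁ + i f₂, B(f) ≥ ν₁ ‖f‖²_{H¹} − ν₂ ( (∫ Q f₁)² + Σ_j (∫ x_j Q f₁)² + (∫ |x|² Q f₁)² + Σ_j (∫ ∂_{x_j}Q f₂)² + (∫ ΛQ f₂)² + (∫ ρ f₂)² ). Then there exist ν > 0 and A₀ > 0 such that for all A ≥ A₀ and all f = f₁ + i f₂ ∈ K: ∫ |∇f|² Φ_A + |f|² − (1+4/d) Q^{4/d} f₁² − Q^{4/d} f₂² dx ≥ ν ∫ (|∇f|² + |f|²) Φ_A dx. -/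

import Mathlib

noncomputable section

open MeasureTheory

/-- Partial derivative of a real-valued function on `ℝ^d` in the `i`-th coordinate
direction. -/
def pd {d : ℕ} (f : EuclideanSpace ℝ (Fin d) → ℝ) (i : Fin d)
    (x : EuclideanSpace ℝ (Fin d)) : ℝ :=
  fderiv ℝ f x (EuclideanSpace.single i 1)

/-- Laplacian of a real-valued function on `ℝ^d`. -/
def lap {d : ℕ} (f : EuclideanSpace ℝ (Fin d) → ℝ)
    (x : EuclideanSpace ℝ (Fin d)) : ℝ :=
  ∑ i, pd (pd f i) i x

/-- The complex-valued function `f = f₁ + i f₂` is an `H¹` function: `f₁, f₂` are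
continuously differentiable, and `f` and `∇f` are square integrable. -/
def IsH1 {d : ℕ} (f₁ f₂ : EuclideanSpace ℝ (Fin d) → ℝ) : Prop :=
  ContDiff ℝ 1 f₁ ∧ ContDiff ℝ 1 f₂ ∧
  Integrable (fun x : EuclideanSpace ℝ (Fin d) => f₁ x ^ 2 + f₂ x ^ 2) ∧
  Integrable (fun x : EuclideanSpace ℝ (Fin d) =>
    ∑ i, (pd f₁ i x ^ 2 + pd f₂ i x ^ 2))

/-- The squared `H¹` norm `∫ |f|² + |∇f|²` of `f = f₁ + i f₂`. -/
def H1normSq {d : ℕ} (f₁ f₂ : EuclideanSpace ℝ (Fin d) → ℝ) : ℝ :=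
  (∫ x : EuclideanSpace ℝ (Fin d), (f₁ x ^ 2 + f₂ x ^ 2))
    + ∫ x : EuclideanSpace ℝ (Fin d), ∑ i, (pd f₁ i x ^ 2 + pd f₂ i x ^ 2)

/-- The quadratic form `B(f) = ⟨L₊f₁, f₁⟩ + ⟨L₋f₂, f₂⟩` associated to the linearized
operators around the ground state `Q`. -/
def Bform {d : ℕ} (Q f₁ f₂ : EuclideanSpace ℝ (Fin d) → ℝ) : ℝ :=
  (∫ x : EuclideanSpace ℝ (Fin d),
      ((∑ i, pd f₁ i x ^ 2) + f₁ x ^ 2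
        - (1 + 4 / (d : ℝ)) * Q x ^ ((4 : ℝ) / d) * f₁ x ^ 2))
    + ∫ x : EuclideanSpace ℝ (Fin d),
        ((∑ i, pd f₂ i x ^ 2) + f₂ x ^ 2 - Q x ^ ((4 : ℝ) / d) * f₂ x ^ 2)

/-- Membership in the set `K` of `H¹` functions `f = f₁ + i f₂` satisfying the
orthogonality conditions. -/
def InKset {d : ℕ} (Q ρ f₁ f₂ : EuclideanSpace ℝ (Fin d) → ℝ) : Prop :=
  (∫ x : EuclideanSpace ℝ (Fin d), Q x * f₁ x) = 0 ∧
  (∀ j, (∫ x : EuclideanSpace ℝ (Fin d), x j * Q x * f₁ x) = 0) ∧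
  (∫ x : EuclideanSpace ℝ (Fin d), ‖x‖ ^ 2 * Q x * f₁ x) = 0 ∧
  (∀ j, (∫ x : EuclideanSpace ℝ (Fin d), pd Q j x * f₂ x) = 0) ∧
  (∫ x : EuclideanSpace ℝ (Fin d),
      ((d : ℝ) / 2 * Q x + ∑ i, x i * pd Q i x) * f₂ x) = 0 ∧
  (∫ x : EuclideanSpace ℝ (Fin d), ρ x * f₂ x) = 0


/-- The cut-off `√Φ(x/A)`. -/
def psiA {d : ℕ} (Φ : EuclideanSpace ℝ (Fin d) → ℝ) (A : ℝ)
    (x : EuclideanSpace ℝ (Fin d)) : ℝ := Real.sqrt (Φ (A⁻¹ • x))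

lemma lc_young (A x y : ℝ) (hA : 0 < A) : (x + y) ^ 2 ≤ (1 + 1 / A) * x ^ 2 + (1 + A) * y ^ 2 := by
  have h : (1 + 1 / A) * x ^ 2 + (1 + A) * y ^ 2 - (x + y) ^ 2 = (x - A * y) ^ 2 / A := by
    field_simp; ring
  have : 0 ≤ (x - A * y) ^ 2 / A := by positivity
  linarith

lemma lc_pd_mul {d : ℕ} {p f : EuclideanSpace ℝ (Fin d) → ℝ} (i : Fin d)
    (x : EuclideanSpace ℝ (Fin d)) (hp : DifferentiableAt ℝ p x) (hf : DifferentiableAt ℝ f x) :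
    pd (fun y => p y * f y) i x = p x * pd f i x + f x * pd p i x := by
  unfold pd
  rw [fderiv_fun_mul hp hf]
  simp

lemma lc_psi_contDiff {d : ℕ} {Φ : EuclideanSpace ℝ (Fin d) → ℝ}
    (hs : ContDiff ℝ (⊤ : ℕ∞) Φ) (hpos : ∀ x, 0 < Φ x) (A : ℝ) : ContDiff ℝ 1 (psiA Φ A) := by
  unfold psiA
  have h1 : ContDiff ℝ 1 (fun x : EuclideanSpace ℝ (Fin d) => Φ (A⁻¹ • x)) :=
    (hs.of_le (by exact_mod_cast le_top)).comp (contDiff_const_smul _)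
  exact h1.sqrt (fun x => (hpos _).ne')

lemma lc_psi_pd {d : ℕ} {Φ : EuclideanSpace ℝ (Fin d) → ℝ}
    (hs : ContDiff ℝ (⊤ : ℕ∞) Φ) (hpos : ∀ x, 0 < Φ x) (A : ℝ) (i : Fin d)
    (x : EuclideanSpace ℝ (Fin d)) :
    pd (psiA Φ A) i x = (1 / (2 * Real.sqrt (Φ (A⁻¹ • x)))) * (A⁻¹ * pd Φ i (A⁻¹ • x)) := by
  have hd : DifferentiableAt ℝ Φ (A⁻¹ • x) := (hs.differentiable (by simp)) _
  have h0 : HasFDerivAt (fun y : EuclideanSpace ℝ (Fin d) => A⁻¹ • y)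
      (A⁻¹ • ContinuousLinearMap.id ℝ (EuclideanSpace ℝ (Fin d))) x :=
    (hasFDerivAt_id x).const_smul A⁻¹
  have h1 := (hd.hasFDerivAt.comp x h0).sqrt (hpos _).ne'
  have h2 : fderiv ℝ (psiA Φ A) x = _ := h1.fderiv
  unfold pd
  rw [h2]
  simp

lemma lc_psi_grad {d : ℕ} {Φ : EuclideanSpace ℝ (Fin d) → ℝ}
    (hs : ContDiff ℝ (⊤ : ℕ∞) Φ) (hpos : ∀ x, 0 < Φ x) (CΦ : ℝ)
    (hg : ∀ x : EuclideanSpace ℝ (Fin d), Real.sqrt (∑ i, pd Φ i x ^ 2) ≤ CΦ * Φ x)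
    (A : ℝ) (x : EuclideanSpace ℝ (Fin d)) :
    ∑ i, pd (psiA Φ A) i x ^ 2 ≤ CΦ ^ 2 / (4 * A ^ 2) * Φ (A⁻¹ • x) := by
  set y := A⁻¹ • x with hy
  have hP := hpos y
  have h1 : ∑ i, pd Φ i y ^ 2 ≤ (CΦ * Φ y) ^ 2 := by
    have h0 : 0 ≤ ∑ i, pd Φ i y ^ 2 := Finset.sum_nonneg (fun i _ => sq_nonneg _)
    calc _ = Real.sqrt (∑ i, pd Φ i y ^ 2) ^ 2 := (Real.sq_sqrt h0).symm
      _ ≤ _ := pow_le_pow_left₀ (Real.sqrt_nonneg _) (hg y) 2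
  have h2 : ∑ i, pd (psiA Φ A) i x ^ 2 = (1 / (4 * Φ y) * (A⁻¹) ^ 2) * ∑ i, pd Φ i y ^ 2 := by
    rw [Finset.mul_sum]
    refine Finset.sum_congr rfl (fun i _ => ?_)
    rw [lc_psi_pd hs hpos, ← hy]
    have : (1 / (2 * Real.sqrt (Φ y))) ^ 2 = 1 / (4 * Φ y) := by
      rw [div_pow, mul_pow, Real.sq_sqrt hP.le]; norm_num
    rw [mul_pow, this]; ring
  rw [h2]
  calc _ ≤ (1 / (4 * Φ y) * (A⁻¹) ^ 2) * (CΦ * Φ y) ^ 2 :=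
        mul_le_mul_of_nonneg_left h1 (by positivity)
    _ = _ := by
        rcases eq_or_ne A 0 with h | h
        · simp [h]
        · field_simp

/-- Integrability of squares of functions with exponential decay. -/
lemma lc_sq_int {d : ℕ} (q : EuclideanSpace ℝ (Fin d) → ℝ) (hq : Continuous q) (M δ : ℝ)
    (hδ : 0 < δ)
    (h : ∀ x, |q x| ≤ M * (1 + ‖x‖) ^ 2 * Real.exp (-δ * ‖x‖)) :
    Integrable (fun x => q x ^ 2) := by
  set n : ℕ := d + 5 with hn
  set K : ℝ := n.factorial * Real.exp (2 * δ) / (2 * δ) ^ n with hK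
  have hint : Integrable (fun x : EuclideanSpace ℝ (Fin d) =>
      (M ^ 2 * K) * (1 + ‖x‖) ^ (-((d : ℝ) + 1))) := by
    apply Integrable.const_mul
    apply integrable_one_add_norm
    simp
  refine hint.mono' (hq.pow 2).aestronglyMeasurable (Filter.Eventually.of_forall fun x => ?_)
  have hr : 0 < 1 + ‖x‖ := by positivity
  have h1 : (2 * δ * (1 + ‖x‖)) ^ n / n.factorial ≤ Real.exp (2 * δ * (1 + ‖x‖)) :=
    Real.pow_div_factorial_le_exp _ (by positivity) n
  have h2 : (1 + ‖x‖) ^ n * Real.exp (-(2 * δ * ‖x‖)) ≤ K := by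
    rw [hK, le_div_iff₀ (by positivity)]
    rw [div_le_iff₀ (by positivity), mul_pow] at h1
    have h3 : Real.exp (2 * δ * (1 + ‖x‖)) * Real.exp (-(2 * δ * ‖x‖)) = Real.exp (2 * δ) := by
      rw [← Real.exp_add]; congr 1; ring
    calc _ = ((2 * δ) ^ n * (1 + ‖x‖) ^ n) * Real.exp (-(2 * δ * ‖x‖)) := by ring
      _ ≤ (Real.exp (2 * δ * (1 + ‖x‖)) * n.factorial) * Real.exp (-(2 * δ * ‖x‖)) :=
        mul_le_mul_of_nonneg_right h1 (Real.exp_pos _).le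
      _ = (Real.exp (2 * δ * (1 + ‖x‖)) * Real.exp (-(2 * δ * ‖x‖))) * n.factorial := by ring
      _ = _ := by rw [h3]; ring
  have h4 : q x ^ 2 ≤ M ^ 2 * ((1 + ‖x‖) ^ 4 * Real.exp (-(2 * δ * ‖x‖))) := by
    have h5 := pow_le_pow_left₀ (abs_nonneg _) (h x) 2
    rw [sq_abs] at h5
    refine h5.trans (le_of_eq ?_)
    have : Real.exp (-(2 * δ * ‖x‖)) = Real.exp (-δ * ‖x‖) ^ 2 := by
      rw [← Real.exp_nat_mul]; congr 1; push_cast; ring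
    rw [this]; ring
  rw [Real.norm_eq_abs, abs_of_nonneg (sq_nonneg _)]
  refine h4.trans ?_
  rw [mul_assoc (M ^ 2) K]
  refine mul_le_mul_of_nonneg_left ?_ (sq_nonneg M)
  have h6 : (1 + ‖x‖) ^ (-((d : ℝ) + 1)) = ((1 + ‖x‖) ^ (d + 1))⁻¹ := by
    rw [Real.rpow_neg hr.le]
    congr 1
    exact_mod_cast Real.rpow_natCast (1 + ‖x‖) (d + 1)
  rw [h6, ← div_eq_mul_inv, le_div_iff₀ (by positivity)]
  refine le_trans (le_of_eq ?_) h2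
  rw [hn]; ring

lemma lc_mul_int {d : ℕ} {q f : EuclideanSpace ℝ (Fin d) → ℝ} (hq : Continuous q)
    (hf : Continuous f) (hq2 : Integrable (fun x => q x ^ 2))
    (hf2 : Integrable (fun x => f x ^ 2)) : Integrable (fun x => q x * f x) := by
  refine (hq2.add hf2).mono' (hq.mul hf).aestronglyMeasurable
    (Filter.Eventually.of_forall fun x => ?_)
  simp only [Real.norm_eq_abs, Pi.add_apply]
  rw [abs_le]
  constructor <;> nlinarith [sq_nonneg (q x + f x), sq_nonneg (q x - f x), sq_nonneg (q x), sq_nonneg (f x)]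

/-- multiplication by a bounded continuous function. -/
lemma lc_bdd_int {d : ℕ} {q f : EuclideanSpace ℝ (Fin d) → ℝ} (hq : Continuous q)
    (hf : Integrable f) (M : ℝ) (hM : ∀ x, |q x| ≤ M) : Integrable (fun x => q x * f x) :=
  hf.bdd_mul (c := M) hq.aestronglyMeasurable (Filter.Eventually.of_forall hM)

lemma lc_penalty {d : ℕ} {Φ : EuclideanSpace ℝ (Fin d) → ℝ}
    (hs : ContDiff ℝ (⊤ : ℕ∞) Φ) (hb : ∀ x, 0 < Φ x ∧ Φ x ≤ 1)
    (hone : ∀ x : EuclideanSpace ℝ (Fin d), ‖x‖ ≤ 1 → Φ x = 1)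
    (q : EuclideanSpace ℝ (Fin d) → ℝ) (hq : Continuous q)
    (hq2 : Integrable (fun x => q x ^ 2)) (η : ℝ) (hη : 0 < η) :
    ∀ᶠ A in Filter.atTop, ∀ f : EuclideanSpace ℝ (Fin d) → ℝ, Continuous f →
      Integrable (fun x => f x ^ 2) → ∫ x, q x * f x = 0 →
      (∫ x, q x * (psiA Φ A x * f x)) ^ 2 ≤ η * ∫ x, (1 - Φ (A⁻¹ • x)) * f x ^ 2 := by
  have hψc : ∀ A, Continuous (psiA Φ A) := fun A =>
    (lc_psi_contDiff hs (fun x => (hb x).1) A).continuous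
  have hψ0 : ∀ A x, 0 ≤ psiA Φ A x := fun A x => Real.sqrt_nonneg _
  have hψ1 : ∀ A x, psiA Φ A x ≤ 1 := fun A x => Real.sqrt_le_one.2 (hb _).2
  have hlim : Filter.Tendsto (fun A : ℝ => ∫ x, (1 - psiA Φ A x) * q x ^ 2) Filter.atTop
      (nhds (∫ _x : EuclideanSpace ℝ (Fin d), (0 : ℝ))) := by
    apply tendsto_integral_filter_of_dominated_convergence (fun x => q x ^ 2)
    · exact Filter.Eventually.of_forall fun A =>
        ((continuous_const.sub (hψc A)).mul (hq.pow 2)).aestronglyMeasurable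
    · refine Filter.Eventually.of_forall fun A => Filter.Eventually.of_forall fun x => ?_
      have := hψ0 A x
      have := hψ1 A x
      rw [Real.norm_eq_abs, abs_of_nonneg (mul_nonneg (by linarith) (sq_nonneg _))]
      nlinarith [sq_nonneg (q x)]
    · exact hq2
    · refine Filter.Eventually.of_forall fun x => ?_
      apply tendsto_const_nhds.congr'
      filter_upwards [Filter.eventually_ge_atTop (‖x‖ + 1)] with A hA
      have hA0 : 0 < A := by linarith [norm_nonneg x]
      have : psiA Φ A x = 1 := by
        unfold psiA
        rw [hone, Real.sqrt_one]
        rw [norm_smul, norm_inv, Real.norm_eq_abs, abs_of_pos hA0, inv_mul_le_iff₀ hA0]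
        linarith
      rw [this]; simp
  simp only [integral_zero] at hlim
  filter_upwards [hlim.eventually (gt_mem_nhds hη)] with A hA f hf hf2 h0
  have hw : Continuous (fun x => 1 - psiA Φ A x) := continuous_const.sub (hψc A)
  have hwb : ∀ x, |1 - psiA Φ A x| ≤ 1 := fun x => by
    rw [abs_le]; constructor <;> linarith [hψ0 A x, hψ1 A x]
  have hqf := lc_mul_int hq hf hq2 hf2
  have i1 := lc_bdd_int hw hq2 1 hwb
  have i2 := lc_bdd_int hw hf2 1 hwb
  have i3 := lc_bdd_int hw hqf 1 hwb
  set a := ∫ x, (1 - psiA Φ A x) * q x ^ 2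
  set c := ∫ x, (1 - psiA Φ A x) * f x ^ 2
  set b := ∫ x, (1 - psiA Φ A x) * (q x * f x) with hbdef
  have hpsi : ∫ x, q x * (psiA Φ A x * f x) = - b := by
    have : (fun x => q x * (psiA Φ A x * f x))
        = fun x => q x * f x - (1 - psiA Φ A x) * (q x * f x) := by
      funext x; ring
    rw [this, integral_sub hqf i3, h0, hbdef]; ring
  have hquad : ∀ t : ℝ, 0 ≤ a * (t * t) + (2 * b) * t + c := by
    intro t
    have e : a * (t * t) + (2 * b) * t + c = ∫ x, (1 - psiA Φ A x) * (t * q x + f x) ^ 2 := by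
      have : (fun x => (1 - psiA Φ A x) * (t * q x + f x) ^ 2) =
          fun x => ((t * t) * ((1 - psiA Φ A x) * q x ^ 2)
            + (2 * t) * ((1 - psiA Φ A x) * (q x * f x))) + (1 - psiA Φ A x) * f x ^ 2 := by
        funext x; ring
      have i12 : Integrable (fun x => (t * t) * ((1 - psiA Φ A x) * q x ^ 2)
            + (2 * t) * ((1 - psiA Φ A x) * (q x * f x))) :=
        (i1.const_mul _).add (i3.const_mul _)
      rw [this, integral_add i12 i2, integral_add (i1.const_mul _) (i3.const_mul _), integral_const_mul, integral_const_mul]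
      ring
    rw [e]
    exact integral_nonneg fun x => mul_nonneg (by linarith [hψ1 A x]) (sq_nonneg _)
  have hdis := discrim_le_zero hquad
  rw [discrim] at hdis
  have hc0 : 0 ≤ c := integral_nonneg fun x => mul_nonneg (by linarith [hψ1 A x]) (sq_nonneg _)
  have hΦc : Continuous (fun x : EuclideanSpace ℝ (Fin d) => 1 - Φ (A⁻¹ • x)) :=
    continuous_const.sub (hs.continuous.comp (continuous_const_smul _))
  have i4 : Integrable (fun x => (1 - Φ (A⁻¹ • x)) * f x ^ 2) :=
    lc_bdd_int hΦc hf2 1 (fun x => by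
      have := hb (A⁻¹ • x)
      rw [abs_le]; constructor <;> linarith)
  have hcle : c ≤ ∫ x, (1 - Φ (A⁻¹ • x)) * f x ^ 2 := by
    refine integral_mono i2 i4 fun x => ?_
    refine mul_le_mul_of_nonneg_right ?_ (sq_nonneg _)
    have h1 : Φ (A⁻¹ • x) = psiA Φ A x ^ 2 := (Real.sq_sqrt (hb _).1.le).symm
    rw [h1]
    nlinarith [hψ0 A x, hψ1 A x]
  rw [hpsi]
  calc (-b) ^ 2 ≤ a * c := by nlinarith
    _ ≤ η * c := mul_le_mul_of_nonneg_right hA.le hc0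
    _ ≤ _ := mul_le_mul_of_nonneg_left hcle hη.le

lemma lc_pd_cont {d : ℕ} {f : EuclideanSpace ℝ (Fin d) → ℝ} (hf : ContDiff ℝ 1 f) (i : Fin d) :
    Continuous (pd f i) := by
  unfold pd
  exact (hf.continuous_fderiv (by simp)).clm_apply continuous_const

/-- final algebra -/
lemma lc_algebra (ν₁ A c α β γ τ V S L Bg : ℝ) (hν : 0 < ν₁)
    (hα : 0 ≤ α) (hβ : 0 ≤ β)
    (h1 : 1 / A ≤ ν₁ / 4) (h2 : c / A ≤ 1 / 4) (h3 : 2 * (c / A) ≤ ν₁ / 4)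
    (hL : L ≥ α + β - V + τ / 2) (hB : Bg = γ + β - V) (hS : S ≤ τ / 2)
    (hpen : Bg ≥ ν₁ * (β + γ) - S)
    (hγ : γ ≤ (1 + 1 / A) * α + 2 * (c / A) * β)
    (hγ2 : α ≤ 2 * γ + 2 * (c / A) * β) : L ≥ ν₁ / 4 * (α + β) := by
  have e1 : (1 / A) * α ≤ ν₁ / 4 * α := mul_le_mul_of_nonneg_right h1 hα
  have e2 : (c / A) * β ≤ 1 / 4 * β := mul_le_mul_of_nonneg_right h2 hβ
  have e3 : 2 * (c / A) * β ≤ ν₁ / 4 * β := mul_le_mul_of_nonneg_right h3 hβ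
  have e4 : ν₁ * γ ≥ ν₁ * (α / 2 - 1 / 4 * β) := mul_le_mul_of_nonneg_left (by linarith) hν.le
  have e5 : 0 ≤ ν₁ * α := by positivity
  have e6 : 0 ≤ ν₁ * β := by positivity
  nlinarith

lemma lc_split {d : ℕ} {f₁ f₂ : EuclideanSpace ℝ (Fin d) → ℝ} (h : IsH1 f₁ f₂) :
    Integrable (fun x => f₁ x ^ 2) ∧ Integrable (fun x => f₂ x ^ 2) ∧
    Integrable (fun x => ∑ i, pd f₁ i x ^ 2) ∧ Integrable (fun x => ∑ i, pd f₂ i x ^ 2) := by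
  obtain ⟨c1, c2, h1, h2⟩ := h
  have s1 : Continuous (fun x => ∑ i, pd f₁ i x ^ 2) :=
    continuous_finsetSum _ fun i _ => (lc_pd_cont c1 i).pow 2
  have s2 : Continuous (fun x => ∑ i, pd f₂ i x ^ 2) :=
    continuous_finsetSum _ fun i _ => (lc_pd_cont c2 i).pow 2
  have n1 : ∀ x, 0 ≤ ∑ i, pd f₁ i x ^ 2 := fun x => Finset.sum_nonneg fun i _ => sq_nonneg _
  have n2 : ∀ x, 0 ≤ ∑ i, pd f₂ i x ^ 2 := fun x => Finset.sum_nonneg fun i _ => sq_nonneg _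
  refine ⟨?_, ?_, ?_, ?_⟩
  · refine h1.mono' (c1.continuous.pow 2).aestronglyMeasurable (Filter.Eventually.of_forall fun x => ?_)
    rw [Real.norm_eq_abs, abs_of_nonneg (sq_nonneg _)]
    nlinarith [sq_nonneg (f₂ x)]
  · refine h1.mono' (c2.continuous.pow 2).aestronglyMeasurable (Filter.Eventually.of_forall fun x => ?_)
    rw [Real.norm_eq_abs, abs_of_nonneg (sq_nonneg _)]
    nlinarith [sq_nonneg (f₁ x)]
  · refine h2.mono' s1.aestronglyMeasurable (Filter.Eventually.of_forall fun x => ?_)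
    rw [Real.norm_eq_abs, abs_of_nonneg (n1 x), Finset.sum_add_distrib]
    linarith [n2 x]
  · refine h2.mono' s2.aestronglyMeasurable (Filter.Eventually.of_forall fun x => ?_)
    rw [Real.norm_eq_abs, abs_of_nonneg (n2 x), Finset.sum_add_distrib]
    linarith [n1 x]

lemma lc_Bform {d : ℕ} {Q f₁ f₂ : EuclideanSpace ℝ (Fin d) → ℝ} (h : IsH1 f₁ f₂)
    (hV : Continuous fun x => Q x ^ ((4 : ℝ) / d)) (M : ℝ)
    (hM : ∀ x, |Q x ^ ((4 : ℝ) / d)| ≤ M) :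
    Bform Q f₁ f₂ = (∫ x, ∑ i, (pd f₁ i x ^ 2 + pd f₂ i x ^ 2)) + (∫ x, (f₁ x ^ 2 + f₂ x ^ 2))
      - ∫ x, ((1 + 4 / (d : ℝ)) * (Q x ^ ((4 : ℝ) / d) * f₁ x ^ 2)
        + Q x ^ ((4 : ℝ) / d) * f₂ x ^ 2) := by
  obtain ⟨i1, i2, i3, i4⟩ := lc_split h
  obtain ⟨c1, c2, h1, h2⟩ := h
  have v1 := (lc_bdd_int hV i1 M hM).const_mul (1 + 4 / (d : ℝ))
  have v2 := lc_bdd_int hV i2 M hM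
  have w1 : Integrable (fun x => (∑ i, pd f₁ i x ^ 2) + f₁ x ^ 2
        - (1 + 4 / (d : ℝ)) * Q x ^ ((4 : ℝ) / d) * f₁ x ^ 2) := by
    refine ((i3.add i1).sub v1).congr (Filter.Eventually.of_forall fun x => ?_)
    simp only [Pi.add_apply, Pi.sub_apply]; ring
  have w2 : Integrable (fun x => (∑ i, pd f₂ i x ^ 2) + f₂ x ^ 2
        - Q x ^ ((4 : ℝ) / d) * f₂ x ^ 2) := (i4.add i2).sub v2
  have h12 : Integrable (fun x => (∑ i, (pd f₁ i x ^ 2 + pd f₂ i x ^ 2))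
      + (f₁ x ^ 2 + f₂ x ^ 2)) := h2.add h1
  have v12 : Integrable (fun x => (1 + 4 / (d : ℝ)) * (Q x ^ ((4 : ℝ) / d) * f₁ x ^ 2)
        + Q x ^ ((4 : ℝ) / d) * f₂ x ^ 2) := v1.add v2
  unfold Bform
  rw [← integral_add w1 w2, ← integral_add h2 h1, ← integral_sub h12 v12]
  congr 1
  funext x
  rw [Finset.sum_add_distrib]; ring

lemma lc_cut {d : ℕ} {Φ : EuclideanSpace ℝ (Fin d) → ℝ}
    (hs : ContDiff ℝ (⊤ : ℕ∞) Φ) (hb : ∀ x, 0 < Φ x ∧ Φ x ≤ 1) (CΦ : ℝ)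
    (hg : ∀ x : EuclideanSpace ℝ (Fin d), Real.sqrt (∑ i, pd Φ i x ^ 2) ≤ CΦ * Φ x)
    (A : ℝ) (hA : 1 ≤ A) {f₁ f₂ : EuclideanSpace ℝ (Fin d) → ℝ} (h : IsH1 f₁ f₂) :
    IsH1 (fun x => psiA Φ A x * f₁ x) (fun x => psiA Φ A x * f₂ x) ∧
    Integrable (fun x => (∑ i, (pd f₁ i x ^ 2 + pd f₂ i x ^ 2)) * Φ (A⁻¹ • x)) ∧
    Integrable (fun x => (f₁ x ^ 2 + f₂ x ^ 2) * Φ (A⁻¹ • x)) ∧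
    (∫ x, ∑ i, (pd (fun x => psiA Φ A x * f₁ x) i x ^ 2 + pd (fun x => psiA Φ A x * f₂ x) i x ^ 2))
      ≤ (1 + 1 / A) * (∫ x, (∑ i, (pd f₁ i x ^ 2 + pd f₂ i x ^ 2)) * Φ (A⁻¹ • x))
        + 2 * (CΦ ^ 2 / 4 / A) * ∫ x, (f₁ x ^ 2 + f₂ x ^ 2) * Φ (A⁻¹ • x) ∧
    (∫ x, (∑ i, (pd f₁ i x ^ 2 + pd f₂ i x ^ 2)) * Φ (A⁻¹ • x))
      ≤ 2 * (∫ x, ∑ i, (pd (fun x => psiA Φ A x * f₁ x) i x ^ 2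
            + pd (fun x => psiA Φ A x * f₂ x) i x ^ 2))
        + 2 * (CΦ ^ 2 / 4 / A) * ∫ x, (f₁ x ^ 2 + f₂ x ^ 2) * Φ (A⁻¹ • x) := by
  obtain ⟨c1, c2, h1, h2⟩ := h
  have hA0 : 0 < A := by linarith
  have hψ := lc_psi_contDiff hs (fun x => (hb x).1) A
  have hΦc : Continuous (fun x : EuclideanSpace ℝ (Fin d) => Φ (A⁻¹ • x)) :=
    hs.continuous.comp (continuous_const_smul _)
  have hΦb : ∀ x : EuclideanSpace ℝ (Fin d), |Φ (A⁻¹ • x)| ≤ 1 := fun x => by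
    rw [abs_of_pos (hb _).1]; exact (hb _).2
  have hsq : ∀ x, psiA Φ A x ^ 2 = Φ (A⁻¹ • x) := fun x => Real.sq_sqrt (hb _).1.le
  have j1 : Integrable (fun x => (∑ i, (pd f₁ i x ^ 2 + pd f₂ i x ^ 2)) * Φ (A⁻¹ • x)) := by
    simpa only [mul_comm] using lc_bdd_int hΦc h2 1 hΦb
  have j2 : Integrable (fun x => (f₁ x ^ 2 + f₂ x ^ 2) * Φ (A⁻¹ • x)) := by
    simpa only [mul_comm] using lc_bdd_int hΦc h1 1 hΦb
  have g1 : ContDiff ℝ 1 (fun x => psiA Φ A x * f₁ x) := hψ.mul c1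
  have g2 : ContDiff ℝ 1 (fun x => psiA Φ A x * f₂ x) := hψ.mul c2
  have hpd1 : ∀ i x, pd (fun x => psiA Φ A x * f₁ x) i x
      = psiA Φ A x * pd f₁ i x + f₁ x * pd (psiA Φ A) i x := fun i x =>
    lc_pd_mul i x (hψ.differentiable (by simp) x) (c1.differentiable (by simp) x)
  have hpd2 : ∀ i x, pd (fun x => psiA Φ A x * f₂ x) i x
      = psiA Φ A x * pd f₂ i x + f₂ x * pd (psiA Φ A) i x := fun i x =>
    lc_pd_mul i x (hψ.differentiable (by simp) x) (c2.differentiable (by simp) x)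
  have hgr := lc_psi_grad hs (fun x => (hb x).1) CΦ hg A
  -- pointwise inequalities
  have p1 : ∀ x, (∑ i, (pd (fun x => psiA Φ A x * f₁ x) i x ^ 2
        + pd (fun x => psiA Φ A x * f₂ x) i x ^ 2))
      ≤ (1 + 1 / A) * ((∑ i, (pd f₁ i x ^ 2 + pd f₂ i x ^ 2)) * Φ (A⁻¹ • x))
        + 2 * (CΦ ^ 2 / 4 / A) * ((f₁ x ^ 2 + f₂ x ^ 2) * Φ (A⁻¹ • x)) := by
    intro x
    have e1 : (∑ i, (pd (fun x => psiA Φ A x * f₁ x) i x ^ 2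
        + pd (fun x => psiA Φ A x * f₂ x) i x ^ 2))
        ≤ (1 + 1 / A) * ((∑ i, (pd f₁ i x ^ 2 + pd f₂ i x ^ 2)) * Φ (A⁻¹ • x))
          + (1 + A) * (f₁ x ^ 2 + f₂ x ^ 2) * ∑ i, pd (psiA Φ A) i x ^ 2 := by
      rw [Finset.sum_mul, Finset.mul_sum, Finset.mul_sum, ← Finset.sum_add_distrib]
      refine Finset.sum_le_sum fun i _ => ?_
      rw [hpd1, hpd2, ← hsq]
      have a1 := lc_young A (psiA Φ A x * pd f₁ i x) (f₁ x * pd (psiA Φ A) i x) hA0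
      have a2 := lc_young A (psiA Φ A x * pd f₂ i x) (f₂ x * pd (psiA Φ A) i x) hA0
      refine (add_le_add a1 a2).trans (le_of_eq ?_)
      ring
    have e2 : (1 + A) * (f₁ x ^ 2 + f₂ x ^ 2) * ∑ i, pd (psiA Φ A) i x ^ 2
        ≤ (2 * A) * (f₁ x ^ 2 + f₂ x ^ 2) * (CΦ ^ 2 / (4 * A ^ 2) * Φ (A⁻¹ • x)) := by
      refine mul_le_mul ?_ (hgr x) (Finset.sum_nonneg fun i _ => sq_nonneg _) (by positivity)
      exact mul_le_mul_of_nonneg_right (by linarith) (by positivity)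
    have e3 : (2 * A) * (f₁ x ^ 2 + f₂ x ^ 2) * (CΦ ^ 2 / (4 * A ^ 2) * Φ (A⁻¹ • x))
        = 2 * (CΦ ^ 2 / 4 / A) * ((f₁ x ^ 2 + f₂ x ^ 2) * Φ (A⁻¹ • x)) := by
      field_simp
    linarith
  have p2 : ∀ x, (∑ i, (pd f₁ i x ^ 2 + pd f₂ i x ^ 2)) * Φ (A⁻¹ • x)
      ≤ 2 * (∑ i, (pd (fun x => psiA Φ A x * f₁ x) i x ^ 2
        + pd (fun x => psiA Φ A x * f₂ x) i x ^ 2))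
        + 2 * (CΦ ^ 2 / 4 / A) * ((f₁ x ^ 2 + f₂ x ^ 2) * Φ (A⁻¹ • x)) := by
    intro x
    have e1 : (∑ i, (pd f₁ i x ^ 2 + pd f₂ i x ^ 2)) * Φ (A⁻¹ • x)
        ≤ 2 * (∑ i, (pd (fun x => psiA Φ A x * f₁ x) i x ^ 2
        + pd (fun x => psiA Φ A x * f₂ x) i x ^ 2))
          + 2 * (f₁ x ^ 2 + f₂ x ^ 2) * ∑ i, pd (psiA Φ A) i x ^ 2 := by
      rw [Finset.sum_mul, Finset.mul_sum, Finset.mul_sum, ← Finset.sum_add_distrib]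
      refine Finset.sum_le_sum fun i _ => ?_
      rw [hpd1, hpd2, ← hsq]
      nlinarith [sq_nonneg (psiA Φ A x * pd f₁ i x + 2 * (f₁ x * pd (psiA Φ A) i x)),
        sq_nonneg (psiA Φ A x * pd f₂ i x + 2 * (f₂ x * pd (psiA Φ A) i x))]
    have e2 : 2 * (f₁ x ^ 2 + f₂ x ^ 2) * ∑ i, pd (psiA Φ A) i x ^ 2
        ≤ (2 * A) * (f₁ x ^ 2 + f₂ x ^ 2) * (CΦ ^ 2 / (4 * A ^ 2) * Φ (A⁻¹ • x)) := by
      refine mul_le_mul ?_ (hgr x) (Finset.sum_nonneg fun i _ => sq_nonneg _) (by positivity)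
      exact mul_le_mul_of_nonneg_right (by linarith) (by positivity)
    have e3 : (2 * A) * (f₁ x ^ 2 + f₂ x ^ 2) * (CΦ ^ 2 / (4 * A ^ 2) * Φ (A⁻¹ • x))
        = 2 * (CΦ ^ 2 / 4 / A) * ((f₁ x ^ 2 + f₂ x ^ 2) * Φ (A⁻¹ • x)) := by
      field_simp
    linarith
  have hG : Integrable (fun x => ∑ i, (pd (fun x => psiA Φ A x * f₁ x) i x ^ 2
        + pd (fun x => psiA Φ A x * f₂ x) i x ^ 2)) := by
    refine ((j1.const_mul (1 + 1 / A)).add (j2.const_mul (2 * (CΦ ^ 2 / 4 / A)))).mono'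
      (continuous_finsetSum _ fun i _ =>
        ((lc_pd_cont g1 i).pow 2).add ((lc_pd_cont g2 i).pow 2)).aestronglyMeasurable
      (Filter.Eventually.of_forall fun x => ?_)
    rw [Real.norm_eq_abs, abs_of_nonneg (Finset.sum_nonneg fun i _ => by positivity)]
    exact p1 x
  refine ⟨⟨g1, g2, ?_, hG⟩, j1, j2, ?_, ?_⟩
  · refine j2.congr (Filter.Eventually.of_forall fun x => ?_)
    simp only [← hsq]; ring
  · rw [← integral_const_mul, ← integral_const_mul,
      ← integral_add (j1.const_mul _) (j2.const_mul _)]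
    exact integral_mono hG ((j1.const_mul _).add (j2.const_mul _)) p1
  · rw [← integral_const_mul, ← integral_const_mul,
      ← integral_add (hG.const_mul _) (j2.const_mul _)]
    exact integral_mono j1 ((hG.const_mul _).add (j2.const_mul _)) p2

lemma lc_V_decay {d : ℕ} (hd : 1 ≤ d) {Q : EuclideanSpace ℝ (Fin d) → ℝ} (hQpos : ∀ x, 0 < Q x)
    (C₀ δ₀ : ℝ) (hC₀ : 0 < C₀) (hδ₀ : 0 < δ₀)
    (h : ∀ x, Q x ≤ C₀ * Real.exp (-δ₀ * ‖x‖)) :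
    ∀ᶠ A : ℝ in Filter.atTop, ∀ x : EuclideanSpace ℝ (Fin d), A ≤ ‖x‖ →
      (1 + 4 / (d : ℝ)) * Q x ^ ((4 : ℝ) / d) ≤ 1 / 2 := by
  have hp : 0 < (4 : ℝ) / d := by
    have : (0 : ℝ) < d := by exact_mod_cast hd
    positivity
  have t0 : Filter.Tendsto (fun A : ℝ => -δ₀ * A) Filter.atTop Filter.atBot :=
    Filter.tendsto_id.const_mul_atTop_of_neg (by linarith)
  have t1 : Filter.Tendsto (fun A : ℝ => C₀ * Real.exp (-δ₀ * A)) Filter.atTop (nhds 0) := by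
    simpa using (Real.tendsto_exp_atBot.comp t0).const_mul C₀
  have t2 : Filter.Tendsto (fun A : ℝ => (1 + 4 / (d : ℝ)) *
      (C₀ * Real.exp (-δ₀ * A)) ^ ((4 : ℝ) / d)) Filter.atTop (nhds 0) := by
    have := (t1.rpow_const (p := (4 : ℝ) / d) (Or.inr hp.le)).const_mul (1 + 4 / (d : ℝ))
    rwa [Real.zero_rpow hp.ne', mul_zero] at this
  filter_upwards [t2.eventually (gt_mem_nhds (show (0 : ℝ) < 1 / 2 by norm_num))] with A hA x hx
  refine le_trans (mul_le_mul_of_nonneg_left ?_ (by positivity)) hA.le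
  refine Real.rpow_le_rpow (hQpos x).le ((h x).trans ?_) hp.le
  refine mul_le_mul_of_nonneg_left (Real.exp_le_exp.2 ?_) hC₀.le
  nlinarith

lemma lc_coord {d : ℕ} (x : EuclideanSpace ℝ (Fin d)) (j : Fin d) : |x j| ≤ ‖x‖ := by
  simpa using PiLp.norm_apply_le x j

lemma lc_pot (k V a b : ℝ) (hk : 0 ≤ k) (hV : 0 ≤ V) (h : (1 + k) * V ≤ 1 / 2) :
    0 ≤ (a ^ 2 + b ^ 2) / 2 - (1 + k) * V * a ^ 2 - V * b ^ 2 := by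
  have z2 : V ≤ 1 / 2 := by linarith [mul_nonneg hk hV, add_mul 1 k V, one_mul V]
  have z3 := mul_le_mul_of_nonneg_right h (sq_nonneg a)
  have z4 := mul_le_mul_of_nonneg_right z2 (sq_nonneg b)
  linarith

set_option maxHeartbeats 1000000

/-- localized coercivity of the quadratic form `B` on the set `K`. -/
theorem localized_coercivity (d : ℕ) (hd : 1 ≤ d)
    (Q : EuclideanSpace ℝ (Fin d) → ℝ)
    (hQsmooth : ContDiff ℝ (⊤ : ℕ∞) Q) (hQpos : ∀ x, 0 < Q x)
    (hQradial : ∀ x y : EuclideanSpace ℝ (Fin d), ‖x‖ = ‖y‖ → Q x = Q y)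
    (hQsol : ∀ x, lap Q x - Q x + Q x ^ ((1 : ℝ) + 4 / d) = 0)
    (C₀ δ₀ : ℝ) (hC₀ : 0 < C₀) (hδ₀ : 0 < δ₀)
    (hQdecay : ∀ x : EuclideanSpace ℝ (Fin d),
      |Q x| ≤ C₀ * Real.exp (-δ₀ * ‖x‖) ∧
      (∀ i, |pd Q i x| ≤ C₀ * Real.exp (-δ₀ * ‖x‖)) ∧
      (∀ i j, |pd (pd Q i) j x| ≤ C₀ * Real.exp (-δ₀ * ‖x‖)))
    (ρ : EuclideanSpace ℝ (Fin d) → ℝ)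
    (hρsmooth : ContDiff ℝ 2 ρ)
    (hρradial : ∀ x y : EuclideanSpace ℝ (Fin d), ‖x‖ = ‖y‖ → ρ x = ρ y)
    (hρeq : ∀ x, -lap ρ x + ρ x - (1 + 4 / (d : ℝ)) * Q x ^ ((4 : ℝ) / d) * ρ x
      = -(‖x‖ ^ 2 * Q x))
    (hρdecay : ∀ x : EuclideanSpace ℝ (Fin d),
      |ρ x| + Real.sqrt (∑ i, pd ρ i x ^ 2) ≤ C₀ * Real.exp (-δ₀ * ‖x‖))
    (Φ : EuclideanSpace ℝ (Fin d) → ℝ)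
    (hΦsmooth : ContDiff ℝ (⊤ : ℕ∞) Φ)
    (hΦradial : ∀ x y : EuclideanSpace ℝ (Fin d), ‖x‖ = ‖y‖ → Φ x = Φ y)
    (hΦone : ∀ x : EuclideanSpace ℝ (Fin d), ‖x‖ ≤ 1 → Φ x = 1)
    (hΦexp : ∀ x : EuclideanSpace ℝ (Fin d), 2 ≤ ‖x‖ → Φ x = Real.exp (-‖x‖))
    (hΦbdd : ∀ x : EuclideanSpace ℝ (Fin d), 0 < Φ x ∧ Φ x ≤ 1)
    (CΦ : ℝ)
    (hΦgrad : ∀ x : EuclideanSpace ℝ (Fin d),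
      Real.sqrt (∑ i, pd Φ i x ^ 2) ≤ CΦ * Φ x)
    (hpen : ∃ ν₁ > (0 : ℝ), ∃ ν₂ > (0 : ℝ), ∀ f₁ f₂ : EuclideanSpace ℝ (Fin d) → ℝ,
      IsH1 f₁ f₂ →
      Bform Q f₁ f₂ ≥ ν₁ * H1normSq f₁ f₂
        - ν₂ * ((∫ x : EuclideanSpace ℝ (Fin d), Q x * f₁ x) ^ 2
          + (∑ j, (∫ x : EuclideanSpace ℝ (Fin d), x j * Q x * f₁ x) ^ 2)
          + (∫ x : EuclideanSpace ℝ (Fin d), ‖x‖ ^ 2 * Q x * f₁ x) ^ 2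
          + (∑ j, (∫ x : EuclideanSpace ℝ (Fin d), pd Q j x * f₂ x) ^ 2)
          + (∫ x : EuclideanSpace ℝ (Fin d),
              ((d : ℝ) / 2 * Q x + ∑ i, x i * pd Q i x) * f₂ x) ^ 2
          + (∫ x : EuclideanSpace ℝ (Fin d), ρ x * f₂ x) ^ 2)) :
    ∃ ν > (0 : ℝ), ∃ A₀ > (0 : ℝ), ∀ A ≥ A₀,
      ∀ f₁ f₂ : EuclideanSpace ℝ (Fin d) → ℝ,
        IsH1 f₁ f₂ → InKset Q ρ f₁ f₂ →
        (∫ x : EuclideanSpace ℝ (Fin d),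
            ((∑ i, (pd f₁ i x ^ 2 + pd f₂ i x ^ 2)) * Φ (A⁻¹ • x)
              + (f₁ x ^ 2 + f₂ x ^ 2)
              - (1 + 4 / (d : ℝ)) * Q x ^ ((4 : ℝ) / d) * f₁ x ^ 2
              - Q x ^ ((4 : ℝ) / d) * f₂ x ^ 2))
          ≥ ν * ∫ x : EuclideanSpace ℝ (Fin d),
              ((∑ i, (pd f₁ i x ^ 2 + pd f₂ i x ^ 2)) + (f₁ x ^ 2 + f₂ x ^ 2))
                * Φ (A⁻¹ • x) := by
  obtain ⟨ν₁, hν₁, ν₂, hν₂, hpen⟩ := hpen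
  have hdpos : (0 : ℝ) < d := by exact_mod_cast hd
  have hp : 0 < (4 : ℝ) / d := by positivity
  have hQc : Continuous Q := hQsmooth.continuous
  have hρc : Continuous ρ := hρsmooth.continuous
  have hpdQ : ∀ j, Continuous (pd Q j) :=
    lc_pd_cont (hQsmooth.of_le (by exact_mod_cast le_top))
  have hQle : ∀ x, Q x ≤ C₀ * Real.exp (-δ₀ * ‖x‖) := fun x =>
    (le_abs_self _).trans (hQdecay x).1
  have hcoord : ∀ j, Continuous (fun x : EuclideanSpace ℝ (Fin d) => x j) := fun j => by fun_prop
  -- square integrability of the weights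
  have b0 : ∀ (M : ℝ), 0 ≤ M → ∀ x : EuclideanSpace ℝ (Fin d), M ≤ M * (1 + ‖x‖) ^ 2 := by
    intro M hM x
    nlinarith [norm_nonneg x, mul_nonneg hM (norm_nonneg x), mul_nonneg hM (sq_nonneg ‖x‖)]
  have base : ∀ x : EuclideanSpace ℝ (Fin d), C₀ * Real.exp (-δ₀ * ‖x‖)
      ≤ C₀ * (1 + ‖x‖) ^ 2 * Real.exp (-δ₀ * ‖x‖) := fun x =>
    mul_le_mul_of_nonneg_right (b0 C₀ hC₀.le x) (Real.exp_pos _).le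
  have q1 : Integrable (fun x => Q x ^ 2) :=
    lc_sq_int Q hQc C₀ δ₀ hδ₀ fun x => (hQdecay x).1.trans (base x)
  have q2 : ∀ j, Integrable (fun x : EuclideanSpace ℝ (Fin d) => (x j * Q x) ^ 2) := fun j => by
    refine lc_sq_int (fun x => x j * Q x) ((hcoord j).mul hQc) C₀ δ₀ hδ₀ fun x => ?_
    rw [abs_mul]
    calc _ ≤ (1 + ‖x‖) ^ 2 * (C₀ * Real.exp (-δ₀ * ‖x‖)) := by
          refine mul_le_mul ?_ (hQdecay x).1 (abs_nonneg _) (by positivity)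
          nlinarith [lc_coord x j, norm_nonneg x]
      _ = _ := by ring
  have q3 : Integrable (fun x : EuclideanSpace ℝ (Fin d) => (‖x‖ ^ 2 * Q x) ^ 2) := by
    refine lc_sq_int (fun x => ‖x‖ ^ 2 * Q x) ((continuous_norm.pow 2).mul hQc) C₀ δ₀ hδ₀
      fun x => ?_
    rw [abs_mul]
    calc _ ≤ (1 + ‖x‖) ^ 2 * (C₀ * Real.exp (-δ₀ * ‖x‖)) := by
          refine mul_le_mul ?_ (hQdecay x).1 (abs_nonneg _) (by positivity)
          rw [abs_of_nonneg (by positivity)]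
          nlinarith [norm_nonneg x]
      _ = _ := by ring
  have q4 : ∀ j, Integrable (fun x : EuclideanSpace ℝ (Fin d) => pd Q j x ^ 2) := fun j =>
    lc_sq_int (pd Q j) (hpdQ j) C₀ δ₀ hδ₀ fun x => ((hQdecay x).2.1 j).trans (base x)
  have hΛc : Continuous (fun x : EuclideanSpace ℝ (Fin d) =>
      (d : ℝ) / 2 * Q x + ∑ i, x i * pd Q i x) :=
    (continuous_const.mul hQc).add
      (continuous_finsetSum _ fun i _ => (hcoord i).mul (hpdQ i))
  have q5 : Integrable (fun x : EuclideanSpace ℝ (Fin d) =>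
      ((d : ℝ) / 2 * Q x + ∑ i, x i * pd Q i x) ^ 2) := by
    refine lc_sq_int (fun x => (d : ℝ) / 2 * Q x + ∑ i, x i * pd Q i x) hΛc
      (d * C₀) δ₀ hδ₀ fun x => ?_
    have hE : 0 ≤ C₀ * Real.exp (-δ₀ * ‖x‖) := by positivity
    have e1 : |∑ i, x i * pd Q i x| ≤ d * (‖x‖ * (C₀ * Real.exp (-δ₀ * ‖x‖))) := by
      refine (Finset.abs_sum_le_sum_abs _ _).trans ?_
      have : ∀ i ∈ Finset.univ, |x i * pd Q i x| ≤ ‖x‖ * (C₀ * Real.exp (-δ₀ * ‖x‖)) := by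
        intro i _
        rw [abs_mul]
        exact mul_le_mul (lc_coord x i) ((hQdecay x).2.1 i) (abs_nonneg _) (norm_nonneg _)
      refine (Finset.sum_le_sum this).trans (le_of_eq ?_)
      simp
    have e2 : |(d : ℝ) / 2 * Q x| ≤ d / 2 * (C₀ * Real.exp (-δ₀ * ‖x‖)) := by
      rw [abs_mul, abs_of_pos (by positivity : (0 : ℝ) < d / 2)]
      exact mul_le_mul_of_nonneg_left (hQdecay x).1 (by positivity)
    have e3 : (d : ℝ) * C₀ * (1 + ‖x‖) ^ 2 * Real.exp (-δ₀ * ‖x‖)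
        = d * (C₀ * Real.exp (-δ₀ * ‖x‖)) + 2 * (d * (‖x‖ * (C₀ * Real.exp (-δ₀ * ‖x‖))))
          + d * (C₀ * Real.exp (-δ₀ * ‖x‖)) * ‖x‖ ^ 2 := by ring
    have e4 : 0 ≤ (d : ℝ) * (C₀ * Real.exp (-δ₀ * ‖x‖)) := by positivity
    have e5 : 0 ≤ (d : ℝ) * (‖x‖ * (C₀ * Real.exp (-δ₀ * ‖x‖))) := by positivity
    have e6 : 0 ≤ (d : ℝ) * (C₀ * Real.exp (-δ₀ * ‖x‖)) * ‖x‖ ^ 2 := by positivity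
    have e7 := abs_add_le ((d : ℝ) / 2 * Q x) (∑ i, x i * pd Q i x)
    rw [e3]
    linarith
  have q6 : Integrable (fun x => ρ x ^ 2) :=
    lc_sq_int ρ hρc C₀ δ₀ hδ₀ fun x => by
      refine le_trans ?_ ((hρdecay x).trans (base x))
      linarith [Real.sqrt_nonneg (∑ i, pd ρ i x ^ 2)]
  -- potential
  have hV : Continuous fun x => Q x ^ ((4 : ℝ) / d) :=
    hQc.rpow_const fun x => Or.inl (hQpos x).ne'
  have hV0 : ∀ x, 0 ≤ Q x ^ ((4 : ℝ) / d) := fun x => Real.rpow_nonneg (hQpos x).le _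
  have hVM : ∀ x, |Q x ^ ((4 : ℝ) / d)| ≤ C₀ ^ ((4 : ℝ) / d) := fun x => by
    rw [abs_of_nonneg (hV0 x)]
    refine Real.rpow_le_rpow (hQpos x).le ((hQle x).trans ?_) hp.le
    have : Real.exp (-δ₀ * ‖x‖) ≤ 1 := Real.exp_le_one_iff.2 (by nlinarith [norm_nonneg x])
    nlinarith
  set η : ℝ := 1 / (2 * ν₂ * (2 * d + 4)) with hη
  have hηpos : 0 < η := by positivity
  set c : ℝ := CΦ ^ 2 / 4 with hc
  have hc0 : 0 ≤ c := by positivity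
  have hev : ∀ K ε : ℝ, 0 < ε → ∀ᶠ A : ℝ in Filter.atTop, K / A ≤ ε := fun K ε hε =>
    ((tendsto_const_nhds.div_atTop Filter.tendsto_id).eventually
      (gt_mem_nhds hε)).mono fun A h => h.le
  have pen := fun q hq hq2 => lc_penalty (d := d) hΦsmooth hΦbdd hΦone q hq hq2 η hηpos
  have main : ∀ᶠ A : ℝ in Filter.atTop, ∀ f₁ f₂ : EuclideanSpace ℝ (Fin d) → ℝ,
        IsH1 f₁ f₂ → InKset Q ρ f₁ f₂ →
        (∫ x : EuclideanSpace ℝ (Fin d),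
            ((∑ i, (pd f₁ i x ^ 2 + pd f₂ i x ^ 2)) * Φ (A⁻¹ • x)
              + (f₁ x ^ 2 + f₂ x ^ 2)
              - (1 + 4 / (d : ℝ)) * Q x ^ ((4 : ℝ) / d) * f₁ x ^ 2
              - Q x ^ ((4 : ℝ) / d) * f₂ x ^ 2))
          ≥ ν₁ / 4 * ∫ x : EuclideanSpace ℝ (Fin d),
              ((∑ i, (pd f₁ i x ^ 2 + pd f₂ i x ^ 2)) + (f₁ x ^ 2 + f₂ x ^ 2))
                * Φ (A⁻¹ • x) := by
    filter_upwards [Filter.eventually_ge_atTop 1, hev 1 (ν₁ / 4) (by positivity),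
      hev c (1 / 4) (by norm_num), hev c (ν₁ / 8) (by positivity),
      lc_V_decay hd hQpos C₀ δ₀ hC₀ hδ₀ hQle,
      pen _ hQc q1, Filter.eventually_all.2 fun j => pen (fun x => x j * Q x) ((hcoord j).mul hQc) (q2 j),
      pen (fun x => ‖x‖ ^ 2 * Q x) ((continuous_norm.pow 2).mul hQc) q3,
      Filter.eventually_all.2 fun j => pen _ (hpdQ j) (q4 j),
      pen _ hΛc q5, pen _ hρc q6] with A hA1 hA2 hA3 hA4 hVd r1 r2 r3 r4 r5 r6 f₁ f₂ hf hK
    have hA0 : 0 < A := by linarith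
    obtain ⟨k1, k2, k3, k4, k5, k6⟩ := hK
    obtain ⟨i1, i2, -, -⟩ := lc_split hf
    obtain ⟨hg, j1, j2, hγ, hγ2⟩ := lc_cut hΦsmooth hΦbdd CΦ hΦgrad A hA1 hf
    obtain ⟨c1, c2, h1, h2⟩ := hf
    have hΦc : Continuous (fun x : EuclideanSpace ℝ (Fin d) => Φ (A⁻¹ • x)) :=
      hΦsmooth.continuous.comp (continuous_const_smul _)
    have hsq : ∀ x, psiA Φ A x ^ 2 = Φ (A⁻¹ • x) := fun x => Real.sq_sqrt (hΦbdd _).1.le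
    have hτb : ∀ x : EuclideanSpace ℝ (Fin d), |1 - Φ (A⁻¹ • x)| ≤ 1 := fun x => by
      have := hΦbdd (A⁻¹ • x)
      rw [abs_le]; constructor <;> linarith
    have t0 : Integrable (fun x => (1 - Φ (A⁻¹ • x)) * (f₁ x ^ 2 + f₂ x ^ 2)) :=
      lc_bdd_int (continuous_const.sub hΦc) h1 1 hτb
    have t1 := lc_bdd_int (continuous_const.sub hΦc) i1 1 hτb
    have t2 := lc_bdd_int (continuous_const.sub hΦc) i2 1 hτb
    have hτ1 : ∫ x, (1 - Φ (A⁻¹ • x)) * f₁ x ^ 2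
        ≤ ∫ x, (1 - Φ (A⁻¹ • x)) * (f₁ x ^ 2 + f₂ x ^ 2) :=
      integral_mono t1 t0 fun x => mul_le_mul_of_nonneg_left
        (by nlinarith [sq_nonneg (f₂ x)]) (by linarith [(hΦbdd (A⁻¹ • x)).2])
    have hτ2 : ∫ x, (1 - Φ (A⁻¹ • x)) * f₂ x ^ 2
        ≤ ∫ x, (1 - Φ (A⁻¹ • x)) * (f₁ x ^ 2 + f₂ x ^ 2) :=
      integral_mono t2 t0 fun x => mul_le_mul_of_nonneg_left
        (by nlinarith [sq_nonneg (f₁ x)]) (by linarith [(hΦbdd (A⁻¹ • x)).2])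
    have hτ1' := mul_le_mul_of_nonneg_left hτ1 hηpos.le
    have hτ2' := mul_le_mul_of_nonneg_left hτ2 hηpos.le
    have s1 := (r1 f₁ c1.continuous i1 k1).trans hτ1'
    have s2 := fun j => (r2 j f₁ c1.continuous i1 (k2 j)).trans hτ1'
    have s3 := (r3 f₁ c1.continuous i1 k3).trans hτ1'
    have s4 := fun j => (r4 j f₂ c2.continuous i2 (k4 j)).trans hτ2'
    have s5 := (r5 f₂ c2.continuous i2 k5).trans hτ2'
    have s6 := (r6 f₂ c2.continuous i2 k6).trans hτ2'
    have s2' := Finset.sum_le_sum (s := Finset.univ) fun j _ => s2 j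
    have s4' := Finset.sum_le_sum (s := Finset.univ) fun j _ => s4 j
    simp only [Finset.sum_const, Finset.card_univ, Fintype.card_fin, nsmul_eq_mul] at s2' s4'
    have hpg := hpen _ _ hg
    have hB := lc_Bform hg hV _ hVM
    have hβ : ∫ x, ((psiA Φ A x * f₁ x) ^ 2 + (psiA Φ A x * f₂ x) ^ 2)
        = ∫ x, (f₁ x ^ 2 + f₂ x ^ 2) * Φ (A⁻¹ • x) := by
      congr 1; funext x; rw [← hsq]; ring
    unfold H1normSq at hpg
    rw [hβ] at hpg hB
    have hsum : ∫ x, ((∑ i, (pd f₁ i x ^ 2 + pd f₂ i x ^ 2)) + (f₁ x ^ 2 + f₂ x ^ 2))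
                * Φ (A⁻¹ • x) = (∫ x, (∑ i, (pd f₁ i x ^ 2 + pd f₂ i x ^ 2)) * Φ (A⁻¹ • x))
                + ∫ x, (f₁ x ^ 2 + f₂ x ^ 2) * Φ (A⁻¹ • x) := by
      rw [← integral_add j1 j2]; congr 1; funext x; ring
    rw [hsum]
    obtain ⟨gi1, gi2, -, -⟩ := lc_split hg
    have v1 : Integrable (fun x => (1 + 4 / (d : ℝ)) * (Q x ^ ((4 : ℝ) / d) * f₁ x ^ 2)) :=
      (lc_bdd_int hV i1 _ hVM).const_mul _
    have v2 : Integrable (fun x => Q x ^ ((4 : ℝ) / d) * f₂ x ^ 2) := lc_bdd_int hV i2 _ hVM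
    have w : Integrable (fun x => (1 + 4 / (d : ℝ)) *
        (Q x ^ ((4 : ℝ) / d) * (psiA Φ A x * f₁ x) ^ 2)
        + Q x ^ ((4 : ℝ) / d) * (psiA Φ A x * f₂ x) ^ 2) :=
      ((lc_bdd_int hV gi1 _ hVM).const_mul _).add (lc_bdd_int hV gi2 _ hVM)
    refine lc_algebra ν₁ A c _ _ _ (∫ x, (1 - Φ (A⁻¹ • x)) * (f₁ x ^ 2 + f₂ x ^ 2))
      _ _ _ _ hν₁ ?_ ?_ hA2 hA3 (by linarith) ?_ hB ?_ hpg hγ hγ2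
    · exact integral_nonneg fun x => mul_nonneg
        (Finset.sum_nonneg fun i _ => by positivity) (hΦbdd _).1.le
    · exact integral_nonneg fun x => mul_nonneg (by positivity) (hΦbdd _).1.le
    · have u1 : Integrable (fun x => (∑ i, (pd f₁ i x ^ 2 + pd f₂ i x ^ 2)) * Φ (A⁻¹ • x)
          + (f₁ x ^ 2 + f₂ x ^ 2) * Φ (A⁻¹ • x)) := j1.add j2
      have u2 : Integrable (fun x => (∑ i, (pd f₁ i x ^ 2 + pd f₂ i x ^ 2)) * Φ (A⁻¹ • x)
          + (f₁ x ^ 2 + f₂ x ^ 2) * Φ (A⁻¹ • x) - ((1 + 4 / (d : ℝ)) *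
        (Q x ^ ((4 : ℝ) / d) * (psiA Φ A x * f₁ x) ^ 2)
        + Q x ^ ((4 : ℝ) / d) * (psiA Φ A x * f₂ x) ^ 2)) := u1.sub w
      have u3 : Integrable (fun x => (∑ i, (pd f₁ i x ^ 2 + pd f₂ i x ^ 2)) * Φ (A⁻¹ • x)
              + (f₁ x ^ 2 + f₂ x ^ 2)
              - (1 + 4 / (d : ℝ)) * Q x ^ ((4 : ℝ) / d) * f₁ x ^ 2
              - Q x ^ ((4 : ℝ) / d) * f₂ x ^ 2) := by
        refine (((j1.add h1).sub v1).sub v2).congr (Filter.Eventually.of_forall fun x => ?_)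
        simp only [Pi.add_apply, Pi.sub_apply]; ring
      rw [ge_iff_le, ← integral_add j1 j2, ← integral_sub u1 w, ← integral_div,
        ← integral_add u2 (t0.div_const 2)]
      refine integral_mono (u2.add (t0.div_const 2)) u3 fun x => ?_
      simp only [mul_pow, hsq]
      have hkey : 0 ≤ (1 - Φ (A⁻¹ • x)) * ((f₁ x ^ 2 + f₂ x ^ 2) / 2
          - (1 + 4 / (d : ℝ)) * Q x ^ ((4 : ℝ) / d) * f₁ x ^ 2
          - Q x ^ ((4 : ℝ) / d) * f₂ x ^ 2) := by
        rcases le_total ‖x‖ A with hx | hx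
        · have : Φ (A⁻¹ • x) = 1 := by
            apply hΦone
            rw [norm_smul, norm_inv, Real.norm_eq_abs, abs_of_pos hA0, inv_mul_le_iff₀ hA0]
            linarith only [hx]
          rw [this]; simp
        · exact mul_nonneg (by linarith only [(hΦbdd (A⁻¹ • x)).2])
            (lc_pot _ _ _ _ hp.le (hV0 x) (hVd x hx))
      linarith only [hkey]
    · set τ := ∫ x, (1 - Φ (A⁻¹ • x)) * (f₁ x ^ 2 + f₂ x ^ 2) with hτ
      have hfin : ν₂ * ((2 * d + 4) * (η * τ)) = τ / 2 := by
        rw [hη]; field_simp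
      rw [← hfin]
      refine mul_le_mul_of_nonneg_left ?_ hν₂.le
      linarith only [s1, s2', s3, s4', s5, s6]
  obtain ⟨A₀, hA₀⟩ := Filter.eventually_atTop.1 main
  exact ⟨ν₁ / 4, by positivity, max A₀ 1, by positivity, fun A hA => hA₀ A (le_trans (le_max_left _ _) hA)⟩
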